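/- Let P be a nonempty finite index set of ground-truth critical events, each event k ∈ P having a confidence-score sequence C k : Fin L → ℝ, and define the utility U(αl, αu) = |{k ∈ P : k is predicted critical under (αl, αu)}| / |P|. Then for all real thresholds, 0 ≤ U(αl, αu) ≤ 1, and U is antitone with respect to the componentwise order on (αl, αu): if αl ≤ αl' and αu ≤ αu' then U(αl', αu') ≤ U(αl, αu). -/

import Mathlib

open Classical

/-- An event with confidence scores `C` is predicted critical under thresholds `(αl, αu)`
if some layer `q` has `C q ≥ αu` while all earlier layers have scores strictly between
the thresholds. -/
def PredCritical {L : ℕ} (C : Fin L → ℝ) (αl αu : ℝ) : Prop :=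
  ∃ q : Fin L, αu ≤ C q ∧ ∀ t : Fin L, t < q → αl < C t ∧ C t < αu

/-- The utility (true positive rate) of a finite family of ground-truth critical events. -/
noncomputable def Utility {L : ℕ} {ι : Type*} (P : Finset ι) (C : ι → Fin L → ℝ)
    (αl αu : ℝ) : ℝ :=
  ((P.filter (fun k => PredCritical (C k) αl αu)).card : ℝ) / (P.card : ℝ)

theorem exists_and_forall_lt_and_not_iff {α : Type*} [Preorder α] [WellFoundedLT α]
    {p r : α → Prop} :
    (∃ q, p q ∧ ∀ t, t < q → r t ∧ ¬ p t) ↔ ∃ q, p q ∧ ∀ t, t < q → r t := by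
  refine ⟨fun ⟨q, hpq, h⟩ => ⟨q, hpq, fun t ht => (h t ht).1⟩, fun ⟨q, hpq, hr⟩ => ?_⟩
  obtain ⟨m, hmq, hm⟩ := exists_minimal_le_of_wellFoundedLT p q hpq
  exact ⟨m, hm.prop, fun t ht => ⟨hr t (ht.trans_le hmq), hm.not_prop_of_lt ht⟩⟩

section

variable {L : ℕ} {αl αl' αu αu' : ℝ}

/- Exiting at the first layer that reaches `αu` makes the upper bound on the earlier scores
automatic. What remains is visibly antitone in both thresholds, whereas the condition `C t < αu`
in the definition is monotone in `αu`. -/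
theorem predCritical_iff_exists_forall_lower_lt {C : Fin L → ℝ} :
    PredCritical C αl αu ↔ ∃ q : Fin L, αu ≤ C q ∧ ∀ t : Fin L, t < q → αl < C t := by
  simpa only [PredCritical, not_le] using
    exists_and_forall_lt_and_not_iff (p := fun t => αu ≤ C t) (r := fun t => αl < C t)

theorem PredCritical.anti {C : Fin L → ℝ} (hl : αl ≤ αl') (hu : αu ≤ αu')
    (h : PredCritical C αl' αu') : PredCritical C αl αu := by
  rw [predCritical_iff_exists_forall_lower_lt] at h ⊢
  obtain ⟨q, hq, hlt⟩ := h
  exact ⟨q, hu.trans hq, fun t ht => hl.trans_lt (hlt t ht)⟩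

variable {ι : Type*} (P : Finset ι) (C : ι → Fin L → ℝ)

theorem utility_nonneg (αl αu : ℝ) : 0 ≤ Utility P C αl αu :=
  div_nonneg (Nat.cast_nonneg _) (Nat.cast_nonneg _)

theorem utility_le_one (αl αu : ℝ) : Utility P C αl αu ≤ 1 :=
  div_le_one_of_le₀ (Nat.cast_le.mpr (Finset.card_filter_le _ _)) (Nat.cast_nonneg _)

theorem utility_anti (hl : αl ≤ αl') (hu : αu ≤ αu') :
    Utility P C αl' αu' ≤ Utility P C αl αu := by
  have filter_subset : P.filter (fun k => PredCritical (C k) αl' αu') ⊆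
      P.filter (fun k => PredCritical (C k) αl αu) :=
    Finset.monotone_filter_right P fun _ _ => PredCritical.anti hl hu
  unfold Utility
  gcongr

end

theorem utility_mem_unitInterval_and_antitone {L : ℕ} {ι : Type*} (P : Finset ι)
    (hP : P.Nonempty) (C : ι → Fin L → ℝ) :
    (∀ αl αu : ℝ, 0 ≤ Utility P C αl αu ∧ Utility P C αl αu ≤ 1) ∧
    (∀ αl αl' αu αu' : ℝ, αl ≤ αl' → αu ≤ αu' →
      Utility P C αl' αu' ≤ Utility P C αl αu) :=
  ⟨fun αl αu => ⟨utility_nonneg P C αl αu, utility_le_one P C αl αu⟩,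
    fun _ _ _ _ hl hu => utility_anti P C hl hu⟩
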